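/- Define the uncentered truncated mean estimator μ̂_n := (1/n)·Σ_{m=1}^n Trunc(λ·X_m)·X_m. Then for every δ ∈ (0,1] and λ > 0, with probability at least 1 − δ, simultaneously for all n ≥ 1: ‖μ̂_n − μ‖ ≤ 2·v·λ^{p−1}·(β·𝔠_p + K_p·2^{p−1}) + β·log(2/δ)/(λ·n). -/

import Mathlib

open MeasureTheory
open scoped Classical

/-- `truncB x = min(1, ‖x‖)/‖x‖` for `x ≠ 0`, and `truncB 0 = 1`; so `truncB x • x` is the
projection of `x` onto the closed unit ball. -/
noncomputable def truncB {B : Type*} [NormedAddCommGroup B] (x : B) : ℝ :=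
  if x = 0 then 1 else min 1 ‖x‖ / ‖x‖

/-- `K_p = (1/p) ((p-1)/p)^{p-1}`. -/
noncomputable def Kp (p : ℝ) : ℝ := (1 / p) * ((p - 1) / p) ^ (p - 1)

/-- `𝔠_p(ρ) = 2^{p+1} (e^{2ρ} - 2ρ - 1)/(2ρ)²`. -/
noncomputable def frakC (p ρ : ℝ) : ℝ :=
  2 ^ (p + 1) * (Real.exp (2 * ρ) - 2 * ρ - 1) / (2 * ρ) ^ 2


lemma truncB_eq {B : Type*} [NormedAddCommGroup B] (x : B) : truncB x = (max 1 ‖x‖)⁻¹ := by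
  unfold truncB
  split_ifs with h
  · simp [h]
  · have hx : 0 < ‖x‖ := norm_pos_iff.mpr h
    rcases le_total 1 ‖x‖ with h1 | h1
    · rw [min_eq_left h1, max_eq_right h1, one_div]
    · rw [min_eq_right h1, max_eq_left h1, div_self hx.ne', inv_one]

/-- supporting functional quadratic bound -/
lemma smooth_bound {B : Type*} [NormedAddCommGroup B] [NormedSpace ℝ B]
    (β : ℝ)
    (hsmooth : ∀ x y : B, ‖x + y‖ ^ 2 + ‖x - y‖ ^ 2 ≤ 2 * ‖x‖ ^ 2 + 2 * β ^ 2 * ‖y‖ ^ 2)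
    (s : B) : ∃ l : B →L[ℝ] ℝ, ‖l‖ ≤ 1 ∧
      ∀ z, ‖s + z‖ ^ 2 ≤ ‖s‖ ^ 2 + 2 * ‖s‖ * l z + β ^ 2 * ‖z‖ ^ 2 := by
  obtain ⟨l, hl1, hls⟩ := exists_dual_vector'' ℝ s
  have hls' : l s = ‖s‖ := by simpa using hls
  refine ⟨l, hl1, fun z => ?_⟩
  have crude : ∀ y, ‖s + y‖ ^ 2 ≤ ‖s‖ ^ 2 + 2 * ‖s‖ * l y + 2 * β ^ 2 * ‖y‖ ^ 2 := by
    intro y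
    have h1 : ‖s‖ - l y ≤ ‖s - y‖ := by
      calc ‖s‖ - l y = l (s - y) := by rw [map_sub, hls']
        _ ≤ ‖l (s - y)‖ := le_abs_self _
        _ ≤ ‖l‖ * ‖s - y‖ := l.le_opNorm _
        _ ≤ 1 * ‖s - y‖ := by gcongr
        _ = _ := one_mul _
    have h2 := hsmooth s y
    nlinarith [sq_nonneg (‖s - y‖ - ‖s‖), norm_nonneg s]
  have iter : ∀ k : ℕ, ∀ y, ‖s + y‖ ^ 2 ≤
      ‖s‖ ^ 2 + 2 * ‖s‖ * l y + (1 + (1 / 2) ^ k) * β ^ 2 * ‖y‖ ^ 2 := by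
    intro k
    induction k with
    | zero => intro y; have := crude y; norm_num; linarith
    | succ k ih =>
      intro y
      have h1 := ih ((1 / 2 : ℝ) • y)
      have h2 := hsmooth (s + (1 / 2 : ℝ) • y) ((1 / 2 : ℝ) • y)
      have e1 : s + (1 / 2 : ℝ) • y + (1 / 2 : ℝ) • y = s + y := by module
      have e2 : s + (1 / 2 : ℝ) • y - (1 / 2 : ℝ) • y = s := by module
      have e3 : ‖(1 / 2 : ℝ) • y‖ = ‖y‖ / 2 := by rw [norm_smul]; norm_num; ring
      rw [e1, e2, e3] at h2
      rw [e3, map_smul, smul_eq_mul] at h1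
      rw [pow_succ]
      linear_combination h2 + 2 * h1
  have lim : Filter.Tendsto (fun k : ℕ => ‖s‖ ^ 2 + 2 * ‖s‖ * l z +
      (1 + (1 / 2 : ℝ) ^ k) * β ^ 2 * ‖z‖ ^ 2) Filter.atTop
      (nhds (‖s‖ ^ 2 + 2 * ‖s‖ * l z + (1 + 0) * β ^ 2 * ‖z‖ ^ 2)) := by
    have := tendsto_pow_atTop_nhds_zero_of_lt_one (r := (1 / 2 : ℝ)) (by norm_num) (by norm_num)
    exact tendsto_const_nhds.add (((tendsto_const_nhds.add this).mul_const _).mul_const _)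
  have := ge_of_tendsto' lim (fun k => iter k z)
  linarith

lemma cosh_comb (x y q t : ℝ) (ht0 : 0 ≤ t) (ht1 : t ≤ 1)
    (hq : q ^ 2 = t * x ^ 2 + (1 - t) * y ^ 2) :
    Real.cosh q ≤ t * Real.cosh x + (1 - t) * Real.cosh y := by
  have h1 := Real.hasSum_cosh q
  have h2 := ((Real.hasSum_cosh x).mul_left t).add ((Real.hasSum_cosh y).mul_left (1 - t))
  refine hasSum_le (fun n => ?_) h1 h2
  rw [pow_mul, pow_mul, pow_mul, hq]
  have hcv : ConvexOn ℝ (Set.Ici (0 : ℝ)) (fun x : ℝ => x ^ n) := convexOn_pow n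
  have hc := hcv.2 (Set.mem_Ici.mpr (sq_nonneg x)) (Set.mem_Ici.mpr (sq_nonneg y)) ht0
    (show 0 ≤ 1 - t by linarith) (by ring)
  simp only [smul_eq_mul] at hc
  calc _ ≤ (t * (x ^ 2) ^ n + (1 - t) * (y ^ 2) ^ n) / ((2 * n).factorial : ℝ) := by gcongr
    _ = _ := by ring

lemma exp_quad (y : ℝ) (h0 : 0 ≤ y) (h1 : y ≤ 1.65) : Real.exp y ≤ 1 + y + y ^ 2 := by
  have hb := Real.exp_bound' (x := y / 2) (by linarith) (by linarith) (n := 4) (by norm_num)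
  simp [Finset.sum_range_succ, Nat.factorial] at hb
  have e : Real.exp y = Real.exp (y / 2) ^ 2 := by rw [← Real.exp_nat_mul]; congr 1; push_cast; ring
  obtain ⟨u, rfl⟩ : ∃ u, y = 2 * u := ⟨y / 2, by ring⟩
  rw [e]
  have e2 : 2 * u / 2 = u := by ring
  rw [e2] at hb ⊢
  have hu0 : 0 ≤ u := by linarith
  have hu1 : u ≤ 0.825 := by linarith
  have hb2 : Real.exp u ≤ 1 + u + 0.682 * u ^ 2 := by
    have : u ^ 3 ≤ 0.825 * u ^ 2 := by nlinarith [sq_nonneg u]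
    have : u ^ 4 ≤ 0.825 ^ 2 * u ^ 2 := by nlinarith [sq_nonneg u, pow_nonneg hu0 3]
    norm_num at *
    linarith [sq_nonneg u]
  have h2 : Real.exp u ^ 2 ≤ (1 + u + 0.682 * u ^ 2) ^ 2 := by
    have := Real.exp_pos u
    gcongr
  refine h2.trans ?_
  have : u ^ 3 ≤ 0.825 * u ^ 2 := by nlinarith [sq_nonneg u]
  have : u ^ 4 ≤ 0.825 ^ 2 * u ^ 2 := by nlinarith [sq_nonneg u, pow_nonneg hu0 3]
  norm_num at *
  nlinarith [sq_nonneg u]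

lemma cosh_key (r w y q : ℝ) (hr : 0 ≤ r) (hy : y ≤ 1.65) (hw : |w| ≤ y)
    (hq0 : 0 ≤ q) (hq : q ^ 2 ≤ r ^ 2 + 2 * r * w + y ^ 2) :
    Real.cosh q ≤ Real.cosh r + w * Real.sinh r + y ^ 2 * Real.cosh r := by
  have hy0 : 0 ≤ y := (abs_nonneg w).trans hw
  obtain ⟨hw1, hw2⟩ := abs_le.mp hw
  have hs0 : 0 ≤ Real.sinh r := Real.sinh_nonneg_iff.mpr hr
  have hsc : Real.sinh r ≤ Real.cosh r := (Real.sinh_lt_cosh r).le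
  have hsy : y ≤ Real.sinh y := Real.self_le_sinh_iff.mpr hy0
  have hex := exp_quad y hy0 hy
  rw [← Real.cosh_add_sinh] at hex
  rcases hy0.eq_or_lt with rfl | hypos
  · have : w = 0 := by linarith
    subst this
    have : q ≤ r := by nlinarith
    have := Real.cosh_le_cosh.mpr (abs_le_abs_of_nonneg hq0 this)
    linarith
  · set t := (1 + w / y) / 2 with ht
    have hwy : w = (2 * t - 1) * y := by rw [ht]; field_simp; ring
    have ht0 : 0 ≤ t := by
      have : -1 ≤ w / y := by rw [le_div_iff₀ hypos]; linarith
      linarith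
    have ht1 : t ≤ 1 := by
      have : w / y ≤ 1 := by rw [div_le_iff₀ hypos]; linarith
      linarith
    set Q := Real.sqrt (r ^ 2 + 2 * r * w + y ^ 2) with hQ
    have hQ2 : Q ^ 2 = r ^ 2 + 2 * r * w + y ^ 2 := Real.sq_sqrt ((sq_nonneg q).trans hq)
    have hqQ : q ≤ Q := Real.le_sqrt_of_sq_le hq
    have h1 : Real.cosh q ≤ Real.cosh Q := Real.cosh_le_cosh.mpr (abs_le_abs_of_nonneg hq0 hqQ)
    have h2 := cosh_comb (r + y) (r - y) Q t ht0 ht1 (by rw [hQ2, hwy]; ring)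
    rw [Real.cosh_add, Real.cosh_sub] at h2
    have h3 : t * (Real.cosh r * Real.cosh y + Real.sinh r * Real.sinh y) +
      (1 - t) * (Real.cosh r * Real.cosh y - Real.sinh r * Real.sinh y) =
      Real.cosh r * Real.cosh y + (2 * t - 1) * (Real.sinh r * (Real.sinh y - y)) + w * Real.sinh r := by
      rw [hwy]; ring
    have h4 : (2 * t - 1) * (Real.sinh r * (Real.sinh y - y)) ≤ 1 * (Real.cosh r * (Real.sinh y - y)) := by
      have : 0 ≤ Real.sinh y - y := by linarith
      apply mul_le_mul (by linarith) (by gcongr) (by positivity) (by norm_num)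
    nlinarith [Real.cosh_pos r]

lemma Kp_bound (p T : ℝ) (hp : 1 < p) (hT : 0 ≤ T) : T - 1 ≤ Kp p * T ^ p := by
  have hp0 : 0 < p := by linarith
  have hp1 : 0 < p - 1 := by linarith
  set t := (p - 1) / p with ht
  have htpos : 0 < t := by positivity
  have hb := one_add_mul_self_le_rpow_one_add (s := T * t - 1) (by nlinarith [mul_nonneg hT htpos.le]) hp.le
  have e : 1 + (T * t - 1) = T * t := by ring
  rw [e, Real.mul_rpow hT htpos.le] at hb
  have e2 : t ^ p = t ^ (p - 1) * t := by
    conv_lhs => rw [show p = (p - 1) + 1 by ring]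
    rw [Real.rpow_add_one htpos.ne']
  have e3 : Kp p * T ^ p * (p - 1) = T ^ p * t ^ p := by
    rw [e2]; unfold Kp; rw [← ht, show p - 1 = t * p by rw [ht]; field_simp]; field_simp
  have e4 : 1 + p * (T * t - 1) = (T - 1) * (p - 1) := by rw [ht]; field_simp; ring
  rw [e4, ← e3] at hb
  exact le_of_mul_le_mul_right hb hp1

lemma frakC_ge (p ρ : ℝ) (hp : 1 < p) (hρ : 0 < ρ) : 2 ≤ frakC p ρ := by
  unfold frakC
  rw [le_div_iff₀ (by positivity)]
  have h1 : (4 : ℝ) ≤ 2 ^ (p + 1) := by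
    calc (4 : ℝ) = 2 ^ (2 : ℝ) := by norm_num
      _ ≤ _ := Real.rpow_le_rpow_of_exponent_le (by norm_num) (by linarith)
  have h2 := Real.quadratic_le_exp_of_nonneg (x := 2 * ρ) (by linarith)
  have h3 : (2 * ρ) ^ 2 / 2 ≤ Real.exp (2 * ρ) - 2 * ρ - 1 := by linarith
  calc 2 * (2 * ρ) ^ 2 = 4 * ((2 * ρ) ^ 2 / 2) := by ring
    _ ≤ _ := by gcongr

lemma ville {Ω : Type*} {mΩ : MeasurableSpace Ω} {P : Measure Ω} [IsProbabilityMeasure P]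
    (ℱ : Filtration ℕ mΩ) (M : ℕ → Ω → ℝ) (h0 : ∀ n ω, 0 ≤ M n ω)
    (hm : ∀ n, StronglyMeasurable[ℱ n] (M n)) (hi : ∀ n, Integrable (M n) P)
    (hstep : ∀ n A, MeasurableSet[ℱ n] A → ∫ ω in A, M (n + 1) ω ∂P ≤ ∫ ω in A, M n ω ∂P)
    (hinit : ∫ ω, M 0 ω ∂P ≤ 1) (ε : ℝ) (hε : 0 < ε) :
    MeasurableSet {ω | ∃ n, ε ≤ M n ω} ∧
    P {ω | ∃ n, ε ≤ M n ω} ≤ ENNReal.ofReal (1 / ε) := by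
  set A : ℕ → Set Ω := fun n => {ω | ∃ k ≤ n, ε ≤ M k ω} with hA
  have hD : ∀ n, MeasurableSet[ℱ n] {ω | ε ≤ M n ω} := fun n =>
    (hm n).measurable measurableSet_Ici
  have hAm : ∀ n, MeasurableSet[ℱ n] (A n) := by
    intro n
    have : A n = ⋃ k ∈ Set.Iic n, {ω | ε ≤ M k ω} := by ext ω; simp [hA]
    rw [this]
    exact MeasurableSet.biUnion (Set.to_countable _) (fun k hk => ℱ.mono hk _ (hD k))
  have hAm' : ∀ n, MeasurableSet (A n) := fun n => ℱ.le n _ (hAm n)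
  have hD' : ∀ n, MeasurableSet {ω | ε ≤ M n ω} := fun n => ℱ.le n _ (hD n)
  have hlow : ∀ n (E : Set Ω), MeasurableSet E → E ⊆ {ω | ε ≤ M n ω} →
      ε * P.real E ≤ ∫ ω in E, M n ω ∂P := by
    intro n E hE hsub
    have := setIntegral_mono_on (μ := P) (s := E) (f := fun _ => ε) (g := M n)
      (integrable_const _).integrableOn (hi n).integrableOn hE (fun x hx => hsub hx)
    rw [setIntegral_const, smul_eq_mul] at this
    linarith
  have key : ∀ n, ε * P.real (A n) + ∫ ω in (A n)ᶜ, M n ω ∂P ≤ 1 := by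
    intro n
    induction n with
    | zero =>
      have h1 := integral_add_compl (hAm' 0) (hi 0)
      have h2 := hlow 0 (A 0) (hAm' 0) (by
        rintro ω ⟨k, hk, h⟩
        obtain rfl : k = 0 := by omega
        exact h)
      linarith
    | succ n ih =>
      set D := {ω | ε ≤ M (n + 1) ω} with hDd
      have e1 : A (n + 1) = A n ∪ ((A n)ᶜ ∩ D) := by
        ext ω
        simp only [hA, hDd, Set.mem_ofPred_eq, Set.mem_union, Set.mem_inter_iff, Set.mem_compl_iff]
        constructor
        · rintro ⟨k, hk, h⟩
          by_cases hh : ∃ k ≤ n, ε ≤ M k ω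
          · exact Or.inl hh
          · refine Or.inr ⟨hh, ?_⟩
            rcases Nat.lt_or_ge n k with h1 | h1
            · obtain rfl : k = n + 1 := by omega
              exact h
            · exact absurd ⟨k, h1, h⟩ hh
        · rintro (⟨k, hk, h⟩ | ⟨_, h⟩)
          · exact ⟨k, by omega, h⟩
          · exact ⟨n + 1, le_rfl, h⟩
      have e2 : (A (n + 1))ᶜ = (A n)ᶜ \ D := by
        rw [e1]; ext ω; simp; tauto
      have hmD : MeasurableSet ((A n)ᶜ ∩ D) := (hAm' n).compl.inter (hD' _)
      have h1 := integral_inter_add_sdiff (s := (A n)ᶜ) (hD' (n + 1)) (hi (n + 1)).integrableOn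
      have h2 := hlow (n + 1) _ hmD Set.inter_subset_right
      have h3 : P.real (A (n + 1)) ≤ P.real (A n) + P.real ((A n)ᶜ ∩ D) := by
        rw [e1]; exact measureReal_union_le _ _
      have h4 := hstep n _ (hAm n).compl
      rw [e2]
      have h5 := mul_le_mul_of_nonneg_left h3 hε.le
      linarith
  have hU : {ω | ∃ n, ε ≤ M n ω} = ⋃ n, A n := by
    ext ω
    simp only [hA, Set.mem_ofPred_eq, Set.mem_iUnion]
    exact ⟨fun ⟨n, h⟩ => ⟨n, n, le_rfl, h⟩, fun ⟨n, k, _, h⟩ => ⟨k, h⟩⟩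
  rw [hU]
  refine ⟨MeasurableSet.iUnion hAm', ?_⟩
  have hmono : Monotone A := fun a b hab ω ⟨k, hk, h⟩ => ⟨k, hk.trans hab, h⟩
  rw [hmono.measure_iUnion]
  refine iSup_le fun n => ?_
  have h1 := key n
  have h2 : 0 ≤ ∫ ω in (A n)ᶜ, M n ω ∂P := integral_nonneg (h0 n)
  rw [← ENNReal.ofReal_toReal (measure_ne_top P (A n))]
  apply ENNReal.ofReal_le_ofReal
  rw [le_div_iff₀ hε]
  change P.real (A n) * ε ≤ 1
  linarith

lemma bdd_cosh_int {B : Type*} [NormedAddCommGroup B]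
    {Ω : Type*} {mΩ : MeasurableSpace Ω} {P : Measure Ω} [IsProbabilityMeasure P]
    (β : ℝ) (hβ : 1 ≤ β) (f : Ω → B) (hf : AEStronglyMeasurable f P) (C : ℝ)
    (hC : ∀ ω, ‖f ω‖ ≤ C) : Integrable (fun ω => Real.cosh (‖f ω‖ / β)) P := by
  have hc : Continuous (fun x : B => Real.cosh (‖x‖ / β)) :=
    Real.continuous_cosh.comp (continuous_norm.div_const β)
  refine Integrable.of_bound (hc.comp_aestronglyMeasurable hf) (Real.cosh (C / β)) ?_
  refine Filter.Eventually.of_forall fun ω => ?_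
  rw [Real.norm_of_nonneg (Real.cosh_pos _).le]
  exact Real.cosh_le_cosh.mpr (abs_le_abs_of_nonneg (by positivity)
    (by have := hC ω; gcongr))

lemma step_const {B : Type*} [NormedAddCommGroup B] [NormedSpace ℝ B] [CompleteSpace B]
    {Ω : Type*} {mΩ : MeasurableSpace Ω} {P : Measure Ω} [IsProbabilityMeasure P]
    (β : ℝ) (hβ : 1 ≤ β)
    (hsmooth : ∀ x y : B, ‖x + y‖ ^ 2 + ‖x - y‖ ^ 2 ≤ 2 * ‖x‖ ^ 2 + 2 * β ^ 2 * ‖y‖ ^ 2)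
    (Z : Ω → B) (hZm : StronglyMeasurable Z) (hZb : ∀ ω, ‖Z ω‖ ≤ 1.65)
    (A : Set Ω) (g b : ℝ)
    (hb : ‖∫ ω in A, Z ω ∂P‖ ≤ b * P.real A) (hg : ∫ ω in A, ‖Z ω‖ ^ 2 ∂P ≤ g * P.real A)
    (s : B) :
    ∫ ω in A, Real.cosh (‖s + Z ω‖ / β) ∂P ≤
      Real.exp (g + b / β) * ∫ _ω in A, Real.cosh (‖s‖ / β) ∂P := by
  have hβ0 : 0 < β := by linarith
  obtain ⟨l, hl, hq⟩ := smooth_bound β hsmooth s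
  have hZi : Integrable Z P := Integrable.of_bound hZm.aestronglyMeasurable 1.65
    (Filter.Eventually.of_forall hZb)
  have hZ2 : Integrable (fun ω => ‖Z ω‖ ^ 2) P := by
    refine Integrable.of_bound (hZm.norm.pow 2).aestronglyMeasurable (1.65 ^ 2)
      (Filter.Eventually.of_forall fun ω => ?_)
    rw [Real.norm_of_nonneg (by positivity)]
    have := hZb ω
    gcongr
  set r := ‖s‖ / β with hr
  have hr0 : 0 ≤ r := by positivity
  have hlz : ∀ z, |l z| ≤ ‖z‖ := fun z => by
    have := l.le_opNorm z
    rw [Real.norm_eq_abs] at this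
    nlinarith [norm_nonneg z]
  have pt : ∀ ω, Real.cosh (‖s + Z ω‖ / β) ≤
      Real.cosh r + (Real.sinh r / β) * l (Z ω) + Real.cosh r * ‖Z ω‖ ^ 2 := by
    intro ω
    have := cosh_key r (l (Z ω) / β) ‖Z ω‖ (‖s + Z ω‖ / β) hr0 (hZb ω) (by
      rw [abs_div, abs_of_pos hβ0, div_le_iff₀ hβ0]
      nlinarith [hlz (Z ω), norm_nonneg (Z ω)]) (by positivity) (by
      rw [hr, div_pow, div_le_iff₀ (by positivity)]
      have := hq (Z ω)
      have e : ((‖s‖ / β) ^ 2 + 2 * (‖s‖ / β) * (l (Z ω) / β) + ‖Z ω‖ ^ 2) * β ^ 2 =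
        ‖s‖ ^ 2 + 2 * ‖s‖ * l (Z ω) + β ^ 2 * ‖Z ω‖ ^ 2 := by field_simp
      rw [e]; exact this)
    calc _ ≤ _ := this
      _ = _ := by ring
  have hlZ : Integrable (fun ω => l (Z ω)) P := l.integrable_comp hZi
  have i1 : Integrable (fun ω => (Real.sinh r / β) * l (Z ω)) P := hlZ.const_mul _
  have i2 : Integrable (fun ω => Real.cosh r * ‖Z ω‖ ^ 2) P := hZ2.const_mul _
  have hL : Integrable (fun ω => Real.cosh (‖s + Z ω‖ / β)) P :=
    bdd_cosh_int β hβ (fun ω => s + Z ω) (hZm.const_add s).aestronglyMeasurable (‖s‖ + 1.65)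
      (fun ω => (norm_add_le _ _).trans (by have := hZb ω; gcongr))
  have h1 : ∫ ω in A, Real.cosh (‖s + Z ω‖ / β) ∂P ≤
      ∫ ω in A, (Real.cosh r + (Real.sinh r / β) * l (Z ω) + Real.cosh r * ‖Z ω‖ ^ 2) ∂P :=
    setIntegral_mono hL.integrableOn
      (((integrable_const _).add i1).add i2).integrableOn pt
  have h2 : ∫ ω in A, (Real.cosh r + (Real.sinh r / β) * l (Z ω) + Real.cosh r * ‖Z ω‖ ^ 2) ∂P =
      P.real A * Real.cosh r + (Real.sinh r / β) * l (∫ ω in A, Z ω ∂P)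
        + Real.cosh r * ∫ ω in A, ‖Z ω‖ ^ 2 ∂P := by
    have i0 : Integrable (fun ω => Real.cosh r + (Real.sinh r / β) * l (Z ω)) P :=
      (integrable_const _).add i1
    rw [integral_add i0.integrableOn i2.integrableOn,
      integral_add (integrable_const _) i1.integrableOn, integral_const_mul, integral_const_mul,
      setIntegral_const, smul_eq_mul, l.integral_comp_comm hZi.integrableOn]
  have h3 : (Real.sinh r / β) * l (∫ ω in A, Z ω ∂P) ≤ (Real.cosh r / β) * (b * P.real A) := by
    have h5 : l (∫ ω in A, Z ω ∂P) ≤ b * P.real A := (le_abs_self _).trans ((hlz _).trans hb)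
    have hs0 : 0 ≤ Real.sinh r := Real.sinh_nonneg_iff.mpr hr0
    have hsc : Real.sinh r ≤ Real.cosh r := (Real.sinh_lt_cosh r).le
    calc _ ≤ (Real.sinh r / β) * (b * P.real A) := by gcongr
      _ ≤ _ := by
        have : 0 ≤ b * P.real A := (norm_nonneg _).trans hb
        gcongr
  have h4 := mul_le_mul_of_nonneg_left hg (Real.cosh_pos r).le
  rw [setIntegral_const, smul_eq_mul]
  have h6 := Real.add_one_le_exp (g + b / β)
  have h7 : 0 ≤ P.real A * Real.cosh r := mul_nonneg measureReal_nonneg (Real.cosh_pos r).le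
  have h8 := mul_le_mul_of_nonneg_right h6 h7
  rw [h2] at h1
  refine le_trans (h1.trans (add_le_add (add_le_add le_rfl h3) h4)) (le_trans (le_of_eq ?_) h8)
  ring

lemma step_full {B : Type*} [NormedAddCommGroup B] [NormedSpace ℝ B] [CompleteSpace B]
    {Ω : Type*} (m : MeasurableSpace Ω) {mΩ : MeasurableSpace Ω} {P : Measure Ω} [IsProbabilityMeasure P]
    (β : ℝ) (hβ : 1 ≤ β)
    (hsmooth : ∀ x y : B, ‖x + y‖ ^ 2 + ‖x - y‖ ^ 2 ≤ 2 * ‖x‖ ^ 2 + 2 * β ^ 2 * ‖y‖ ^ 2)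
    (hm : m ≤ mΩ)
    (Z : Ω → B) (hZm : StronglyMeasurable Z) (hZb : ∀ ω, ‖Z ω‖ ≤ 1.65)
    (g b : ℝ)
    (hb : ∀ A, MeasurableSet[m] A → ‖∫ ω in A, Z ω ∂P‖ ≤ b * P.real A)
    (hg : ∀ A, MeasurableSet[m] A → ∫ ω in A, ‖Z ω‖ ^ 2 ∂P ≤ g * P.real A)
    (S : Ω → B) (hS : StronglyMeasurable[m] S) (C : ℝ) (hC0 : 0 ≤ C) (hC : ∀ ω, ‖S ω‖ ≤ C)
    (A : Set Ω) (hA : MeasurableSet[m] A) :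
    ∫ ω in A, Real.cosh (‖S ω + Z ω‖ / β) ∂P ≤
      Real.exp (g + b / β) * ∫ ω in A, Real.cosh (‖S ω‖ / β) ∂P := by
  have simple : ∀ f : @SimpleFunc Ω m B, (∀ ω, ‖f ω‖ ≤ C) →
      ∫ ω in A, Real.cosh (‖f ω + Z ω‖ / β) ∂P ≤
      Real.exp (g + b / β) * ∫ ω in A, Real.cosh (‖f ω‖ / β) ∂P := by
    intro f hf
    have hfm : StronglyMeasurable f := (@SimpleFunc.stronglyMeasurable _ _ m _ f).mono hm
    have hI1 : Integrable (fun ω => Real.cosh (‖f ω + Z ω‖ / β)) P :=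
      bdd_cosh_int β hβ (fun ω => f ω + Z ω) (hfm.add hZm).aestronglyMeasurable (C + 1.65)
        (fun ω => (norm_add_le _ _).trans (add_le_add (hf ω) (hZb ω)))
    have hI2 : Integrable (fun ω => Real.cosh (‖f ω‖ / β)) P :=
      bdd_cosh_int β hβ f hfm.aestronglyMeasurable C hf
    set R := @SimpleFunc.range _ _ m f with hR
    have hpart : ∀ a, MeasurableSet[m] (A ∩ f ⁻¹' {a}) := fun a =>
      hA.inter (@SimpleFunc.measurableSet_preimage _ _ m f {a})
    have hAe : A = ⋃ a ∈ R, (A ∩ f ⁻¹' {a}) := by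
      ext ω
      simp only [Set.mem_iUnion, Set.mem_inter_iff, Set.mem_preimage, Set.mem_singleton_iff]
      exact ⟨fun h => ⟨f ω, @SimpleFunc.mem_range_self _ _ m f ω, h, rfl⟩, fun ⟨_, _, h, _⟩ => h⟩
    have hdis : Set.Pairwise (↑R) (Function.onFun Disjoint fun a => A ∩ f ⁻¹' {a}) := by
      intro a _ c _ hac
      rw [Function.onFun, Set.disjoint_left]
      rintro ω ⟨_, h1⟩ ⟨_, h2⟩
      exact hac (h1.symm.trans h2)
    have split : ∀ h : Ω → ℝ, Integrable h P →
        ∫ ω in A, h ω ∂P = ∑ a ∈ R, ∫ ω in A ∩ f ⁻¹' {a}, h ω ∂P := by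
      intro h hh
      conv_lhs => rw [hAe]
      exact integral_biUnion_finset R (fun a _ => hm _ (hpart a)) hdis
        (fun a _ => hh.integrableOn)
    rw [split _ hI1, split _ hI2, Finset.mul_sum]
    refine Finset.sum_le_sum fun a _ => ?_
    have hc := step_const β hβ hsmooth Z hZm hZb (A ∩ f ⁻¹' {a}) g b (hb _ (hpart a))
      (hg _ (hpart a)) a
    have e1 : ∫ ω in A ∩ f ⁻¹' {a}, Real.cosh (‖f ω + Z ω‖ / β) ∂P =
        ∫ ω in A ∩ f ⁻¹' {a}, Real.cosh (‖a + Z ω‖ / β) ∂P :=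
      setIntegral_congr_fun (hm _ (hpart a)) (fun ω hω => by
        have : f ω = a := hω.2
        simp only [this])
    have e2 : ∫ ω in A ∩ f ⁻¹' {a}, Real.cosh (‖f ω‖ / β) ∂P =
        ∫ _ω in A ∩ f ⁻¹' {a}, Real.cosh (‖a‖ / β) ∂P :=
      setIntegral_congr_fun (hm _ (hpart a)) (fun ω hω => by
        have : f ω = a := hω.2
        simp only [this])
    rw [e1, e2]
    exact hc
  set F := fun k => hS.approxBounded C k with hF
  have hFb : ∀ k ω, ‖F k ω‖ ≤ C := fun k ω => hS.norm_approxBounded_le hC0 k ω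
  have hFt : ∀ ω, Filter.Tendsto (fun k => F k ω) Filter.atTop (nhds (S ω)) := fun ω =>
    hS.tendsto_approxBounded_of_norm_le (hC ω)
  have hFm : ∀ k, StronglyMeasurable (F k) := fun k =>
    (@SimpleFunc.stronglyMeasurable _ _ m _ (F k)).mono hm
  have dct : ∀ (G : ℕ → Ω → B) (H : Ω → B) (K : ℝ), (∀ k, StronglyMeasurable (G k)) →
      (∀ k ω, ‖G k ω‖ ≤ K) → (∀ ω, Filter.Tendsto (fun k => G k ω) Filter.atTop (nhds (H ω))) →
      Filter.Tendsto (fun k => ∫ ω in A, Real.cosh (‖G k ω‖ / β) ∂P) Filter.atTop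
        (nhds (∫ ω in A, Real.cosh (‖H ω‖ / β) ∂P)) := by
    intro G H K hGm hGb hGt
    have hc : Continuous (fun x : B => Real.cosh (‖x‖ / β)) :=
      Real.continuous_cosh.comp (continuous_norm.div_const β)
    refine tendsto_integral_of_dominated_convergence (fun _ => Real.cosh (K / β)) ?_ ?_ ?_ ?_
    · intro k
      exact hc.comp_aestronglyMeasurable (hGm k).aestronglyMeasurable
    · exact integrable_const _
    · intro k
      refine Filter.Eventually.of_forall fun ω => ?_
      rw [Real.norm_of_nonneg (Real.cosh_pos _).le]
      exact Real.cosh_le_cosh.mpr (abs_le_abs_of_nonneg (by positivity)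
        (by have := hGb k ω; gcongr))
    · exact Filter.Eventually.of_forall fun ω => (hc.tendsto _).comp (hGt ω)
  have t1 := dct (fun k ω => F k ω + Z ω) (fun ω => S ω + Z ω) (C + 1.65)
    (fun k => (hFm k).add hZm) (fun k ω => (norm_add_le _ _).trans (add_le_add (hFb k ω) (hZb ω)))
    (fun ω => (hFt ω).add_const _)
  have t2 := (dct (fun k ω => F k ω) S C hFm hFb hFt).const_mul (Real.exp (g + b / β))
  exact le_of_tendsto_of_tendsto' t1 t2 (fun k => simple (F k) (hFb k))

lemma trunc_facts {B : Type*} [NormedAddCommGroup B] [NormedSpace ℝ B] (lam p : ℝ)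
    (hlam : 0 < lam) (hp1 : 1 < p) (hp2 : p ≤ 2) (x : B) :
    ‖lam • (truncB (lam • x) • x)‖ ≤ 1 ∧
    ‖lam • (truncB (lam • x) • x)‖ ^ 2 ≤ lam ^ p * ‖x‖ ^ p ∧
    ‖lam • (truncB (lam • x) • x - x)‖ ≤ Kp p * (lam ^ p * ‖x‖ ^ p) := by
  set T := lam * ‖x‖ with hT
  have hT0 : 0 ≤ T := by positivity
  have hn : ‖lam • x‖ = T := by rw [norm_smul, Real.norm_of_nonneg hlam.le]
  have hTp : lam ^ p * ‖x‖ ^ p = T ^ p := by rw [hT, Real.mul_rpow hlam.le (norm_nonneg x)]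
  have hKp : 0 ≤ Kp p := by
    unfold Kp
    have : 0 ≤ (p - 1) / p := div_nonneg (by linarith) (by linarith)
    positivity
  rw [truncB_eq, hn, hTp, smul_comm, norm_smul, hn, Real.norm_of_nonneg (by positivity)]
  have e : lam • ((max 1 T)⁻¹ • x - x) = ((max 1 T)⁻¹ - 1) • (lam • x) := by module
  rw [e, norm_smul, hn]
  rcases le_total 1 T with h | h
  · rw [max_eq_right h]
    have hTpos : 0 < T := by linarith
    rw [inv_mul_cancel₀ hTpos.ne']
    refine ⟨le_rfl, ?_, ?_⟩
    · rw [one_pow]; exact Real.one_le_rpow h (by linarith)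
    · rw [Real.norm_of_nonpos (by have := inv_le_one_of_one_le₀ h; linarith)]
      have : -(T⁻¹ - 1) * T = T - 1 := by field_simp; ring
      rw [this]
      exact Kp_bound p T hp1 hT0
  · rw [max_eq_left h]
    simp only [inv_one, one_mul, sub_self, norm_zero, zero_mul]
    refine ⟨h, ?_, by positivity⟩
    rcases hT0.eq_or_lt with h0 | h0
    · rw [← h0]; simp; positivity
    · rw [← Real.rpow_natCast]
      exact Real.rpow_le_rpow_of_exponent_ge h0 h (by exact_mod_cast hp2)

/-- **Line-crossing inequality under a raw (uncentered) `p`-th moment bound.** For the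
uncentered truncated mean `μ̂ₙ = n⁻¹∑_{m≤n} Trunc(λXₘ)Xₘ`, for every `δ ∈ (0,1]` and
`λ > 0`, with probability at least `1 - δ`, simultaneously for all `n ≥ 1`,
`‖μ̂ₙ - μ‖ ≤ 2vλ^{p-1}(β𝔠_p + K_p2^{p-1}) + β log(2/δ)/(λn)`. -/
theorem stmt15
    {B : Type*} [NormedAddCommGroup B] [NormedSpace ℝ B] [CompleteSpace B]
    [TopologicalSpace.SeparableSpace B]
    {Ω : Type*} {mΩ : MeasurableSpace Ω} {P : Measure Ω} [IsProbabilityMeasure P]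
    (β : ℝ) (hβ : 1 ≤ β)
    (hsmooth : ∀ x y : B, ‖x + y‖ ^ 2 + ‖x - y‖ ^ 2 ≤ 2 * ‖x‖ ^ 2 + 2 * β ^ 2 * ‖y‖ ^ 2)
    (ℱ : Filtration ℕ mΩ) (X : ℕ → Ω → B) (μ : B) (p v : ℝ)
    (hp1 : 1 < p) (hp2 : p ≤ 2) (hv : 0 < v)
    (hadapted : ∀ n : ℕ, 1 ≤ n → StronglyMeasurable[ℱ n] (X n))
    (hint : ∀ n : ℕ, 1 ≤ n → Integrable (X n) P)
    (hmom : ∀ n : ℕ, 1 ≤ n → Integrable (fun ω => ‖X n ω‖ ^ p) P)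
    (hcondmean : ∀ n : ℕ, P[X (n + 1) | ℱ n] =ᵐ[P] fun _ => μ)
    (hcondmom : ∀ n : ℕ, ∀ᵐ ω ∂P, (P[fun ω' => ‖X (n + 1) ω'‖ ^ p | ℱ n]) ω ≤ v)
    (δ : ℝ) (hδ : δ ∈ Set.Ioc (0 : ℝ) 1) (lam : ℝ) (hlam : 0 < lam) :
    ENNReal.ofReal (1 - δ) ≤
      P {ω | ∀ n : ℕ, 1 ≤ n →
        ‖(n : ℝ)⁻¹ • (∑ m ∈ Finset.range n, truncB (lam • X (m + 1) ω) • X (m + 1) ω) - μ‖ ≤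
          2 * v * lam ^ (p - 1) * (β * frakC p (1 / β) + Kp p * 2 ^ (p - 1))
            + β * Real.log (2 / δ) / (lam * n)} := by
  obtain ⟨hδ0, hδ1⟩ := hδ
  have hβ0 : 0 < β := by linarith
  have hKp : 0 ≤ Kp p := by
    unfold Kp
    have : 0 ≤ (p - 1) / p := div_nonneg (by linarith) (by linarith)
    positivity
  have hC := frakC_ge p (1 / β) hp1 (by positivity)
  have h2p : (1 : ℝ) ≤ 2 ^ (p - 1) := Real.one_le_rpow (by norm_num) (by linarith)
  set V := lam ^ p * v with hV
  have hV0 : 0 < V := by positivity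
  have hVlam : lam * (v * lam ^ (p - 1)) = V := by
    rw [hV, show lam ^ p = lam ^ (p - 1) * lam by
      rw [← Real.rpow_add_one hlam.ne']; congr 1; ring]
    ring
  have hlog : 0 ≤ Real.log (2 / δ) := Real.log_nonneg (by rw [le_div_iff₀ hδ0]; linarith)
  -- conditional moment facts on sets
  have hXp : ∀ n A, MeasurableSet[ℱ n] A → ∫ ω in A, ‖X (n + 1) ω‖ ^ p ∂P ≤ v * P.real A := by
    intro n A hA
    rw [← setIntegral_condExp (ℱ.le n) (hmom (n + 1) (by omega)) hA]
    calc _ ≤ ∫ _ω in A, v ∂P := setIntegral_mono_ae integrable_condExp.integrableOn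
          (integrable_const _).integrableOn (hcondmom n)
      _ = _ := by rw [setIntegral_const, smul_eq_mul, mul_comm]
  have hXm : ∀ n A, MeasurableSet[ℱ n] A → ∫ ω in A, X (n + 1) ω ∂P = P.real A • μ := by
    intro n A hA
    rw [← setIntegral_condExp (ℱ.le n) (hint (n + 1) (by omega)) hA, ← setIntegral_const]
    exact setIntegral_congr_ae (ℱ.le n _ hA) ((hcondmean n).mono fun ω h _ => h)
  set a := lam * ‖μ‖ with ha
  have ha0 : 0 ≤ a := by positivity
  have hap : a ^ p ≤ V := by
    have h1 := hXm 0 Set.univ MeasurableSet.univ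
    have h2 := hXp 0 Set.univ MeasurableSet.univ
    simp only [Measure.restrict_univ, probReal_univ, one_smul, mul_one] at h1 h2
    have h3 : ‖μ‖ ≤ ∫ ω, ‖X (0 + 1) ω‖ ∂P := by rw [← h1]; exact norm_integral_le_integral_norm _
    have h4 := (convexOn_rpow hp1.le).map_integral_le (μ := P) (f := fun ω => ‖X (0 + 1) ω‖)
      (continuousOn_id.rpow_const (fun x _ => Or.inr (by linarith))) isClosed_Ici
      (Filter.Eventually.of_forall fun ω => norm_nonneg _) (hint 1 le_rfl).norm
      (hmom 1 le_rfl)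
    rw [ha, Real.mul_rpow hlam.le (norm_nonneg _), hV]
    gcongr
    calc ‖μ‖ ^ p ≤ (∫ ω, ‖X (0 + 1) ω‖ ∂P) ^ p := by gcongr
      _ ≤ _ := h4
      _ ≤ v := h2
  have tf := fun x : B => trunc_facts lam p hlam hp1 hp2 x
  set R := 2 * v * lam ^ (p - 1) * (β * frakC p (1 / β) + Kp p * 2 ^ (p - 1)) with hR
  have hRlam : V * (4 * β + Kp p) ≤ lam * R := by
    have e : lam * R = V * (2 * (β * frakC p (1 / β)) + 2 * (Kp p * 2 ^ (p - 1))) := by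
      rw [← hVlam, hR]; ring
    rw [e]
    have h1 : β * 2 ≤ β * frakC p (1 / β) := by gcongr
    have h2 : Kp p * 1 ≤ Kp p * 2 ^ (p - 1) := by gcongr
    refine mul_le_mul_of_nonneg_left ?_ hV0.le
    linarith
  set Z : ℕ → Ω → B := fun m ω => lam • (truncB (lam • X (m + 1) ω) • X (m + 1) ω - μ) with hZ
  have hZn : ∀ m ω, ‖Z m ω‖ ≤ 1 + a := by
    intro m ω
    have e : Z m ω = lam • (truncB (lam • X (m + 1) ω) • X (m + 1) ω) - lam • μ := by
      simp only [hZ, smul_sub]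
    rw [e]
    refine (norm_sub_le _ _).trans (add_le_add (tf _).1 ?_)
    rw [norm_smul, Real.norm_of_nonneg hlam.le]
  set S : ℕ → Ω → B := fun n ω => ∑ m ∈ Finset.range n, Z m ω with hS
  have hSn : ∀ n ω, ‖S n ω‖ ≤ n * (1 + a) := by
    intro n ω
    calc _ ≤ ∑ m ∈ Finset.range n, (1 + a) := norm_sum_le_of_le _ fun m _ => hZn m ω
      _ = _ := by rw [Finset.sum_const, Finset.card_range, nsmul_eq_mul]
  have hest : ∀ (n : ℕ) (ω : Ω), 1 ≤ n →
      lam * n * ‖(n : ℝ)⁻¹ • (∑ m ∈ Finset.range n, truncB (lam • X (m + 1) ω) • X (m + 1) ω) - μ‖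
        = ‖S n ω‖ := by
    intro n ω hn
    have hn0 : (0 : ℝ) < n := by exact_mod_cast hn
    rw [← Real.norm_of_nonneg (show 0 ≤ lam * n by positivity), ← norm_smul]
    congr 1
    simp only [hS, hZ, ← Finset.smul_sum, Finset.sum_sub_distrib, Finset.sum_const,
      Finset.card_range]
    rw [mul_smul, smul_sub, smul_inv_smul₀ hn0.ne', Nat.cast_smul_eq_nsmul]
  -- reduction
  have hred : ∀ (n : ℕ) (ω : Ω), 1 ≤ n → ‖S n ω‖ ≤ n * (V * (4 * β + Kp p)) + β * Real.log (2 / δ) →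
      ‖(n : ℝ)⁻¹ • (∑ m ∈ Finset.range n, truncB (lam • X (m + 1) ω) • X (m + 1) ω) - μ‖ ≤
        R + β * Real.log (2 / δ) / (lam * n) := by
    intro n ω hn h
    have hn0 : (0 : ℝ) < n := by exact_mod_cast hn
    have hln : 0 < lam * n := by positivity
    rw [← hest n ω hn] at h
    refine le_of_mul_le_mul_left (h.trans ?_) hln
    rw [mul_add (lam * (n : ℝ)), mul_div_cancel₀ _ hln.ne']
    have := mul_le_mul_of_nonneg_left hRlam hn0.le
    linarith
  rcases le_or_gt 0.65 a with hbig | hsmall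
  · have huniv : {ω | ∀ n : ℕ, 1 ≤ n →
        ‖(n : ℝ)⁻¹ • (∑ m ∈ Finset.range n, truncB (lam • X (m + 1) ω) • X (m + 1) ω) - μ‖ ≤
          R + β * Real.log (2 / δ) / (lam * n)} = Set.univ := by
      refine Set.eq_univ_of_forall fun ω n hn => hred n ω hn ((hSn n ω).trans ?_)
      have h1 : 1 + a ≤ V * (4 * β + Kp p) := by
        have h4 : V * 4 ≤ V * (4 * β + Kp p) := by gcongr; linarith
        refine le_trans ?_ h4
        rcases le_total 1 a with h | h
        · have : a ^ (1 : ℝ) ≤ a ^ p := Real.rpow_le_rpow_of_exponent_le h hp1.le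
          rw [Real.rpow_one] at this
          linarith
        · have : a ^ (2 : ℝ) ≤ a ^ p :=
            Real.rpow_le_rpow_of_exponent_ge (by linarith) h hp2
          rw [Real.rpow_two] at this
          nlinarith
      have : (n : ℝ) * (1 + a) ≤ n * (V * (4 * β + Kp p)) := by gcongr
      have : 0 ≤ β * Real.log (2 / δ) := by positivity
      linarith
    rw [huniv, measure_univ]
    exact ENNReal.ofReal_le_one.mpr (by linarith)
  · have hZb : ∀ m ω, ‖Z m ω‖ ≤ 1.65 := fun m ω => (hZn m ω).trans (by norm_num at *; linarith)
    have hZm : ∀ m, StronglyMeasurable[ℱ (m + 1)] (Z m) := by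
      intro m
      have hc : Continuous (fun x : B => lam • ((max 1 ‖lam • x‖)⁻¹ • x - μ)) := by
        have : Continuous (fun x : B => (max 1 ‖lam • x‖)⁻¹) :=
          Continuous.inv₀ (by fun_prop) (fun x => by positivity)
        fun_prop
      have := hc.comp_stronglyMeasurable (hadapted (m + 1) (by omega))
      simp only [hZ, truncB_eq]
      exact this
    have hZm' : ∀ m, StronglyMeasurable (Z m) := fun m => (hZm m).mono (ℱ.le _)
    have hSm : ∀ n, StronglyMeasurable[ℱ n] (S n) := by
      intro n
      have : S n = ∑ m ∈ Finset.range n, Z m := by ext ω; simp [hS]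
      rw [this]
      refine Finset.stronglyMeasurable_sum _ fun m hm => (hZm m).mono (ℱ.mono ?_)
      have := Finset.mem_range.mp hm
      omega
    have hXpi : ∀ m, Integrable (fun ω => lam ^ p * ‖X (m + 1) ω‖ ^ p) P := fun m =>
      (hmom (m + 1) (by omega)).const_mul _
    have hXpl : ∀ m A, MeasurableSet[ℱ m] A →
        ∫ ω in A, lam ^ p * ‖X (m + 1) ω‖ ^ p ∂P ≤ V * P.real A := by
      intro m A hA
      rw [integral_const_mul, hV, mul_assoc]
      have := hXp m A hA
      gcongr
    have hZi : ∀ m, Integrable (Z m) P := fun m =>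
      Integrable.of_bound (hZm' m).aestronglyMeasurable 1.65 (Filter.Eventually.of_forall (hZb m))
    have hmean : ∀ m A, MeasurableSet[ℱ m] A →
        ‖∫ ω in A, Z m ω ∂P‖ ≤ (V * Kp p) * P.real A := by
      intro m A hA
      have hXi := (hint (m + 1) (by omega)).sub (integrable_const μ)
      have hX0 : ∫ ω in A, lam • (X (m + 1) ω - μ) ∂P = 0 := by
        rw [integral_smul, integral_sub (hint (m + 1) (by omega)).integrableOn
          (integrable_const _), hXm m A hA, setIntegral_const, sub_self, smul_zero]
      have hXi' : Integrable (fun ω => lam • (X (m + 1) ω - μ)) P := hXi.smul lam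
      have e : ∫ ω in A, Z m ω ∂P = ∫ ω in A, (Z m ω - lam • (X (m + 1) ω - μ)) ∂P := by
        rw [integral_sub (hZi m).integrableOn hXi'.integrableOn, hX0, sub_zero]
      rw [e]
      calc _ ≤ ∫ ω in A, Kp p * (lam ^ p * ‖X (m + 1) ω‖ ^ p) ∂P := by
            refine norm_integral_le_of_norm_le ((hXpi m).const_mul _).integrableOn
              (Filter.Eventually.of_forall fun ω => ?_)
            have e2 : Z m ω - lam • (X (m + 1) ω - μ) =
              lam • (truncB (lam • X (m + 1) ω) • X (m + 1) ω - X (m + 1) ω) := by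
              simp only [hZ, ← smul_sub]; congr 1; abel
            rw [e2]
            exact (tf _).2.2
        _ = Kp p * ∫ ω in A, (lam ^ p * ‖X (m + 1) ω‖ ^ p) ∂P := integral_const_mul _ _
        _ ≤ Kp p * (V * P.real A) := by have := hXpl m A hA; gcongr
        _ = _ := by ring
    have ha2 : a ^ 2 ≤ V := by
      refine le_trans ?_ hap
      rcases ha0.eq_or_lt with h0 | h0
      · rw [← h0]; simp; positivity
      · rw [← Real.rpow_natCast]
        exact Real.rpow_le_rpow_of_exponent_ge h0 (by norm_num at *; linarith)
          (by exact_mod_cast hp2)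
    have hsec : ∀ m A, MeasurableSet[ℱ m] A →
        ∫ ω in A, ‖Z m ω‖ ^ 2 ∂P ≤ (4 * V) * P.real A := by
      intro m A hA
      have hZ2 : Integrable (fun ω => ‖Z m ω‖ ^ 2) P := by
        refine Integrable.of_bound ((hZm' m).norm.pow 2).aestronglyMeasurable (1.65 ^ 2)
          (Filter.Eventually.of_forall fun ω => ?_)
        rw [Real.norm_of_nonneg (by positivity)]
        have := hZb m ω
        gcongr
      have i1 : Integrable (fun ω => 2 * (lam ^ p * ‖X (m + 1) ω‖ ^ p) + 2 * V) P :=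
        ((hXpi m).const_mul 2).add (integrable_const _)
      calc _ ≤ ∫ ω in A, (2 * (lam ^ p * ‖X (m + 1) ω‖ ^ p) + 2 * V) ∂P := by
            refine setIntegral_mono hZ2.integrableOn i1.integrableOn fun ω => ?_
            have e : Z m ω = lam • (truncB (lam • X (m + 1) ω) • X (m + 1) ω) - lam • μ := by
              simp only [hZ, smul_sub]
            have h1 := norm_sub_le (lam • (truncB (lam • X (m + 1) ω) • X (m + 1) ω)) (lam • μ)
            rw [← e, norm_smul lam μ, Real.norm_of_nonneg hlam.le, ← ha] at h1
            have h2 := (tf (X (m + 1) ω)).2.1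
            have h3 := pow_le_pow_left₀ (norm_nonneg _) h1 2
            dsimp only
            nlinarith [sq_nonneg (‖lam • (truncB (lam • X (m + 1) ω) • X (m + 1) ω)‖ - a)]
        _ = 2 * ∫ ω in A, (lam ^ p * ‖X (m + 1) ω‖ ^ p) ∂P + P.real A * (2 * V) := by
            rw [integral_add ((hXpi m).const_mul 2).integrableOn (integrable_const _),
              integral_const_mul, setIntegral_const, smul_eq_mul]
        _ ≤ _ := by have := hXpl m A hA; linarith
    set c := 4 * V + V * Kp p / β with hc
    set M : ℕ → Ω → ℝ := fun n ω => Real.exp (-(n * c)) * Real.cosh (‖S n ω‖ / β) with hM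
    have hcoshm : Continuous (fun x : B => Real.cosh (‖x‖ / β)) :=
      Real.continuous_cosh.comp (continuous_norm.div_const β)
    have hvil := ville (P := P) ℱ M (fun n ω => by have := Real.cosh_pos (‖S n ω‖ / β); positivity)
      (fun n => (hcoshm.comp_stronglyMeasurable (hSm n)).const_mul _)
      (fun n => (bdd_cosh_int β hβ (S n) ((hSm n).mono (ℱ.le n)).aestronglyMeasurable _
        (hSn n)).const_mul _)
      (by
        intro n A hA
        simp only [hM]
        rw [integral_const_mul, integral_const_mul]
        have h1 := step_full (P := P) (ℱ n) β hβ hsmooth (ℱ.le n) (Z n) (hZm' n) (hZb n) (4 * V)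
          (V * Kp p) (hmean n) (hsec n) (S n) (hSm n) (n * (1 + a)) (by positivity) (hSn n) A hA
        have e : ∀ ω, S (n + 1) ω = S n ω + Z n ω := fun ω => Finset.sum_range_succ _ _
        simp only [e]
        rw [← hc] at h1
        refine (mul_le_mul_of_nonneg_left h1 (Real.exp_pos _).le).trans (le_of_eq ?_)
        rw [← mul_assoc, ← Real.exp_add]
        congr 2
        push_cast; ring)
      (by simp [hM, hS]) (1 / δ) (by positivity)
    obtain ⟨hbm, hbP⟩ := hvil
    rw [one_div_one_div] at hbP
    calc ENNReal.ofReal (1 - δ) = 1 - ENNReal.ofReal δ := by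
          rw [ENNReal.ofReal_sub _ hδ0.le, ENNReal.ofReal_one]
      _ ≤ 1 - P {ω | ∃ n, 1 / δ ≤ M n ω} := tsub_le_tsub_left hbP _
      _ = P {ω | ∃ n, 1 / δ ≤ M n ω}ᶜ := (prob_compl_eq_one_sub hbm).symm
      _ ≤ _ := by
          refine measure_mono fun ω hω n hn => hred n ω hn ?_
          have h1 : M n ω < 1 / δ := by
            by_contra hcon
            exact hω ⟨n, not_lt.mp hcon⟩
          have h2 : Real.exp (‖S n ω‖ / β) / 2 ≤ Real.cosh (‖S n ω‖ / β) := by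
            rw [Real.cosh_eq]
            have := Real.exp_pos (-(‖S n ω‖ / β))
            linarith
          have h3 : Real.exp (-(n * c)) * Real.exp (‖S n ω‖ / β) ≤ 2 / δ := by
            have := mul_le_mul_of_nonneg_left h2 (Real.exp_pos (-(n * c))).le
            have e : 2 / δ = 2 * (1 / δ) := by ring
            rw [e]
            simp only [hM] at h1
            linarith
          rw [← Real.exp_add] at h3
          have h4 := (Real.le_log_iff_exp_le (by positivity)).mpr h3
          have h5 : ‖S n ω‖ / β ≤ n * c + Real.log (2 / δ) := by linarith
          rw [div_le_iff₀ hβ0] at h5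
          refine h5.trans (le_of_eq ?_)
          rw [hc]; field_simp
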